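/- For q > 0 with q ≠ 1 and any density matrix ρ on ℂ^n with eigenvalues λ_1,…,λ_n (counted with multiplicity), the quantum Rényi entropy R_q(ρ) = (1/(1−q)) · ln(Σ_i λ_i^q) equals the minimum over all unitary matrices U ∈ U(n) of the classical Rényi entropy of the diagonal of UρU*: R_q(ρ) = min_{U ∈ U(n)} R_q((UρU*)_{11},…,(UρU*)_{nn}), and this minimum is attained. -/

import Mathlib

open Matrix ComplexOrder

/-- Rényi entropy of a (finitely indexed) probability vector, for parameter
`q`: `R_q(p) = (1/(1-q)) * ln (∑ i, p i ^ q)` (real rpow, so `0 ^ q = 0` for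
`q ≠ 0`). -/
noncomputable def Renyi {ι : Type*} [Fintype ι] (q : ℝ) (p : ι → ℝ) : ℝ :=
  (1 / (1 - q)) * Real.log (∑ i, p i ^ q)

/-- A density matrix: positive semidefinite with trace 1. -/
def IsDensityMatrix {ι : Type*} [Fintype ι] [DecidableEq ι]
    (ρ : Matrix ι ι ℂ) : Prop :=
  ρ.PosSemidef ∧ ρ.trace = 1

/-!
By the spectral theorem `ρ = V diag(λ) V*`, so the diagonal of `U ρ U*` is `B λ`, where `B` is the
matrix of the `|W i j|²` with `W = U V`. As `W` is unitary, `B` is doubly stochastic. Jensen's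
inequality in each row of `B`, summed using the column sums, compares `∑ (B λ)ᵢ ^ q` with
`∑ λᵢ ^ q` in the direction given by the convexity (`q > 1`) or concavity (`q < 1`) of `x ^ q`; the
sign of `1 / (1 - q)` changes at the same point, so `R_q(λ) ≤ R_q(B λ)` in both cases. Equality is
attained at `U = V*`, where `B = 1`.
-/

lemma mulVec_pos_of_mem_doublyStochastic {R ι : Type*} [Fintype ι] [DecidableEq ι]
    [Semiring R] [PartialOrder R] [IsStrictOrderedRing R] {B : Matrix ι ι R} {p : ι → R}
    (hB : B ∈ doublyStochastic R ι) (hp : 0 < p) : 0 < B *ᵥ p := by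
  have hnonneg : 0 ≤ B *ᵥ p := fun i =>
    Finset.sum_nonneg fun j _ => mul_nonneg (nonneg_of_mem_doublyStochastic hB) (hp.le j)
  have hsum : 0 < ∑ i, (B *ᵥ p) i := by
    rw [sum_mulVec_of_mem_doublyStochastic hB]
    exact Fintype.sum_pos hp
  exact hnonneg.lt_of_ne fun hzero => hsum.ne' (by simp [← hzero])

section Jensen

variable {R E β ι : Type*} [Fintype ι] [DecidableEq ι]
  [Field R] [LinearOrder R] [IsStrictOrderedRing R]
  [AddCommGroup E] [Module R E]
  [AddCommGroup β] [PartialOrder β] [IsOrderedAddMonoid β] [Module R β] [IsStrictOrderedModule R β]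
  {B : Matrix ι ι R} {s : Set E} {f : E → β} {x : ι → E}

lemma sum_map_sum_smul_le_of_mem_doublyStochastic (hB : B ∈ doublyStochastic R ι)
    (hf : ConvexOn R s f) (hx : ∀ j, x j ∈ s) :
    ∑ i, f (∑ j, B i j • x j) ≤ ∑ j, f (x j) :=
  calc
    ∑ i, f (∑ j, B i j • x j) ≤ ∑ i, ∑ j, B i j • f (x j) :=
      Finset.sum_le_sum fun i _ => hf.map_sum_le (fun _ _ => nonneg_of_mem_doublyStochastic hB)
        (sum_row_of_mem_doublyStochastic hB i) fun j _ => hx j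
    _ = ∑ j, (∑ i, B i j) • f (x j) := by
      rw [Finset.sum_comm]
      simp only [Finset.sum_smul]
    _ = ∑ j, f (x j) := by
      simp only [sum_col_of_mem_doublyStochastic hB, one_smul]

lemma sum_le_sum_map_sum_smul_of_mem_doublyStochastic (hB : B ∈ doublyStochastic R ι)
    (hf : ConcaveOn R s f) (hx : ∀ j, x j ∈ s) :
    ∑ j, f (x j) ≤ ∑ i, f (∑ j, B i j • x j) :=
  sum_map_sum_smul_le_of_mem_doublyStochastic (β := βᵒᵈ) hB hf hx

end Jensen

section Renyi

variable {ι : Type*} [Fintype ι] {q : ℝ} {p : ι → ℝ}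

lemma sum_rpow_pos (hp : 0 < p) : 0 < ∑ i, p i ^ q := by
  obtain ⟨hp0, i, hi⟩ := Pi.lt_def.mp hp
  exact Finset.sum_pos' (fun j _ => Real.rpow_nonneg (hp0 j) q)
    ⟨i, Finset.mem_univ i, Real.rpow_pos_of_pos hi q⟩

lemma renyi_le_renyi_mulVec [DecidableEq ι] (hq : 0 ≤ q) (hq1 : q ≠ 1) {B : Matrix ι ι ℝ}
    (hB : B ∈ doublyStochastic ℝ ι) (hp : 0 < p) : Renyi q p ≤ Renyi q (B *ᵥ p) := by
  have hpos : 0 < ∑ i, p i ^ q := sum_rpow_pos hp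
  have hposB : 0 < ∑ i, (B *ᵥ p) i ^ q := sum_rpow_pos (mulVec_pos_of_mem_doublyStochastic hB hp)
  rcases hq1.lt_or_gt with hlt | hgt
  · have hsum : ∑ i, p i ^ q ≤ ∑ i, (B *ᵥ p) i ^ q :=
      sum_le_sum_map_sum_smul_of_mem_doublyStochastic hB (Real.concaveOn_rpow hq hlt.le) hp.le
    exact mul_le_mul_of_nonneg_left (Real.log_le_log hpos hsum)
      (one_div_nonneg.mpr (sub_nonneg.mpr hlt.le))
  · have hsum : ∑ i, (B *ᵥ p) i ^ q ≤ ∑ i, p i ^ q :=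
      sum_map_sum_smul_le_of_mem_doublyStochastic hB (convexOn_rpow hgt.le) hp.le
    exact mul_le_mul_of_nonpos_left (Real.log_le_log hposB hsum)
      (one_div_nonpos.mpr (sub_nonpos.mpr hgt.le))

end Renyi

section Unitary

variable {𝕜 m n : Type*} [RCLike 𝕜] [Fintype n]

lemma re_mul_diagonal_mul_conjTranspose_apply_self [DecidableEq n] (W : Matrix m n 𝕜)
    (l : n → ℝ) (i : m) :
    RCLike.re ((W * diagonal (RCLike.ofReal ∘ l : n → 𝕜) * Wᴴ) i i) =
      (W.map (‖·‖ ^ 2) *ᵥ l) i := by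
  have hterm (j : n) : W i j * (l j : 𝕜) * star (W i j) = ((‖W i j‖ ^ 2 * l j : ℝ) : 𝕜) := by
    rw [mul_right_comm, RCLike.star_def, RCLike.mul_conj]
    push_cast
    rfl
  simp only [Matrix.mul_apply (N := Wᴴ), mul_diagonal, conjTranspose_apply, Function.comp_apply,
    hterm, map_sum, RCLike.ofReal_re, mulVec, dotProduct, map_apply]

lemma map_norm_sq_mulVec_one [DecidableEq m] {W : Matrix m n 𝕜} (hW : W * Wᴴ = 1) :
    W.map (‖·‖ ^ 2) *ᵥ (1 : n → ℝ) = 1 := by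
  classical
  ext i
  rw [← re_mul_diagonal_mul_conjTranspose_apply_self]
  simp [Function.comp_def, hW]

variable [DecidableEq n]

lemma re_diag_mul_mul_conjTranspose_eq_mulVec_eigenvalues {A : Matrix n n 𝕜}
    (hA : A.IsHermitian) (U : Matrix m n 𝕜) :
    (fun i => RCLike.re ((U * A * Uᴴ) i i)) =
      (U * (hA.eigenvectorUnitary : Matrix n n 𝕜)).map (‖·‖ ^ 2) *ᵥ hA.eigenvalues := by
  ext i
  rw [← re_mul_diagonal_mul_conjTranspose_apply_self]
  conv_lhs => rw [hA.spectral_theorem, Unitary.conjStarAlgAut_apply]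
  simp only [conjTranspose_mul, Matrix.mul_assoc, star_eq_conjTranspose]

lemma map_norm_sq_mem_doublyStochastic {W : Matrix n n 𝕜} (hW : W ∈ unitaryGroup n 𝕜) :
    W.map (‖·‖ ^ 2) ∈ doublyStochastic ℝ n := by
  have htranspose : (W.map (‖·‖ ^ 2))ᵀ = Wᴴ.map (‖·‖ ^ 2) := by
    ext i j
    simp
  refine mem_doublyStochastic.mpr
    ⟨fun i j => sq_nonneg ‖W i j‖, map_norm_sq_mulVec_one (mem_unitaryGroup_iff.mp hW), ?_⟩
  rw [← mulVec_transpose, htranspose]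
  exact map_norm_sq_mulVec_one (by simpa using! mem_unitaryGroup_iff'.mp hW)

lemma eigenvalues_pos_of_ne_zero {A : Matrix n n 𝕜} (hA : A.PosSemidef) (hA0 : A ≠ 0) :
    0 < hA.isHermitian.eigenvalues :=
  lt_of_le_of_ne hA.eigenvalues_nonneg fun h =>
    hA0 (hA.isHermitian.eigenvalues_eq_zero_iff.mp h.symm)

theorem quantum_renyi_eq_min_diag_renyi_general {q : ℝ} (hq : 0 < q) (hq1 : q ≠ 1)
    {ρ : Matrix n n 𝕜} (hρ : ρ.PosSemidef) (hρ0 : ρ ≠ 0) :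
    IsLeast
      {x : ℝ | ∃ U : unitaryGroup n 𝕜,
        x = Renyi q fun i => RCLike.re (((U : Matrix n n 𝕜) * ρ * (U : Matrix n n 𝕜)ᴴ) i i)}
      (Renyi q hρ.isHermitian.eigenvalues) := by
  set V := hρ.isHermitian.eigenvectorUnitary
  simp only [re_diag_mul_mul_conjTranspose_eq_mulVec_eigenvalues hρ.isHermitian]
  constructor
  · have hVV : ((star V : unitaryGroup n 𝕜) : Matrix n n 𝕜) * (V : Matrix n n 𝕜) = 1 :=
      Unitary.coe_star_mul_self V
    have hone : (1 : Matrix n n 𝕜).map (‖·‖ ^ 2) = 1 := Matrix.map_one _ (by simp) (by simp)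
    exact ⟨star V, by rw [hVV, hone, one_mulVec]⟩
  · rintro _ ⟨U, rfl⟩
    exact renyi_le_renyi_mulVec hq.le hq1 (map_norm_sq_mem_doublyStochastic (U * V).2)
      (eigenvalues_pos_of_ne_zero hρ hρ0)

end Unitary

/-- for `q > 0`, `q ≠ 1`, the quantum Rényi entropy of a
density matrix `ρ` (the classical Rényi entropy of its eigenvalues) is the
minimum over all unitaries `U` of the classical Rényi entropy of the diagonal
of `U ρ U*`, and the minimum is attained. -/
theorem quantum_renyi_eq_min_diag_renyi (n : ℕ) (q : ℝ)
    (hq : 0 < q) (hq1 : q ≠ 1)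
    (ρ : Matrix (Fin n) (Fin n) ℂ) (hρ : IsDensityMatrix ρ) :
    IsLeast
      {x : ℝ | ∃ U : Matrix.unitaryGroup (Fin n) ℂ,
        x = Renyi q (fun i =>
          (((U : Matrix (Fin n) (Fin n) ℂ) * ρ *
            (U : Matrix (Fin n) (Fin n) ℂ)ᴴ) i i).re)}
      (Renyi q hρ.1.1.eigenvalues) :=
  quantum_renyi_eq_min_diag_renyi_general hq hq1 hρ.1 fun h => by simpa [h] using hρ.2
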